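/- (Existence of the intermediate state in Case 2 of the Riemann problem) Let f_L, b_L, g_L, q_L, f_R, b_R be positive real numbers with f_R·b_R < f_L·b_L, and define F₂(g) = q_L·g³ + g·g_L·(f_R b_R − f_L b_L − √(f_L b_L f_R b_R)) − g_L²·(g_L q_L + f_L b_L − f_R b_R − √(f_L b_L f_R b_R)). Then F₂(g_L) < 0 and F₂(g) → +∞ as g → +∞, so there exists g* with g* > g_L and F₂(g*) = 0. -/

import Mathlib

/-!
Substituting `g = g_L` cancels both the `q_L` and the square-root terms of `F₂` and leaves
`F₂(g_L) = -2 g_L² (f_L b_L - f_R b_R) < 0`. The leading coefficient `q_L` is positive, so `F₂`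
tends to `+∞` and the intermediate value theorem on `[g_L, ∞)` gives a root beyond `g_L`.
-/

open Filter Set

theorem Ioi_subset_image_Ioi_of_tendsto_atTop {α δ : Type*}
    [ConditionallyCompleteLinearOrder α] [DenselyOrdered α] [TopologicalSpace α] [OrderTopology α]
    [LinearOrder δ] [TopologicalSpace δ] [OrderClosedTopology δ] {f : α → δ} {a : α}
    (hf : ContinuousOn f (Ici a)) (hlim : Tendsto f atTop atTop) :
    Ioi (f a) ⊆ f '' Ioi a := by
  intro y hy
  have : Nonempty α := ⟨a⟩
  obtain ⟨x, hax, rfl⟩ := isPreconnected_Ici.intermediate_value_Ici self_mem_Ici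
    (le_principal_iff.2 (Ici_mem_atTop a)) hf hlim (Ioi_subset_Ici_self hy)
  have hne : a ≠ x := by
    rintro rfl
    exact lt_irrefl _ hy
  exact ⟨x, lt_of_le_of_ne hax hne, rfl⟩

theorem tendsto_eval_cubic_atTop {𝕜 : Type*} [NormedField 𝕜] [LinearOrder 𝕜]
    [IsStrictOrderedRing 𝕜] [OrderTopology 𝕜] {P : Cubic 𝕜} (ha : 0 < P.a) :
    Tendsto (fun x => P.toPoly.eval x) atTop atTop := by
  refine P.toPoly.tendsto_atTop_of_leadingCoeff_nonneg ?_ ?_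
  · rw [Cubic.degree_of_a_ne_zero ha.ne']
    norm_num
  · rw [Cubic.leadingCoeff_of_a_ne_zero ha.ne']
    exact ha.le

/-- The cubic `F₂` whose root beyond `gL` is the intermediate film height `g_M*`. The parameters
`φL`, `φR` stand for the products `f_L b_L`, `f_R b_R`, and `s` for `√(f_L b_L f_R b_R)`. -/
def case2Cubic (φL φR s gL qL g : ℝ) : ℝ :=
  qL * g ^ 3 + g * gL * (φR - φL - s) - gL ^ 2 * (gL * qL + φL - φR - s)

section case2Cubic

variable {φL φR s gL qL : ℝ}

theorem case2Cubic_self : case2Cubic φL φR s gL qL gL = -2 * gL ^ 2 * (φL - φR) := by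
  unfold case2Cubic
  ring

theorem case2Cubic_self_neg (hgL : gL ≠ 0) (hlt : φR < φL) :
    case2Cubic φL φR s gL qL gL < 0 := by
  have hpos : 0 < gL ^ 2 * (φL - φR) := mul_pos (sq_pos_of_ne_zero hgL) (sub_pos.2 hlt)
  rw [case2Cubic_self]
  linarith

theorem continuous_case2Cubic : Continuous (case2Cubic φL φR s gL qL) := by
  unfold case2Cubic
  fun_prop

theorem tendsto_case2Cubic_atTop (hqL : 0 < qL) :
    Tendsto (case2Cubic φL φR s gL qL) atTop atTop := by
  let P : Cubic ℝ := ⟨qL, 0, gL * (φR - φL - s), -(gL ^ 2 * (gL * qL + φL - φR - s))⟩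
  refine (tendsto_eval_cubic_atTop (P := P) hqL).congr fun g => ?_
  simp only [P, Cubic.toPoly, case2Cubic, Polynomial.eval_add, Polynomial.eval_mul,
    Polynomial.eval_C, Polynomial.eval_pow, Polynomial.eval_X]
  ring

theorem riemann_case2_intermediate_state_general (hgL : gL ≠ 0) (hqL : 0 < qL) (hlt : φR < φL) :
    case2Cubic φL φR s gL qL gL < 0 ∧
      Tendsto (case2Cubic φL φR s gL qL) atTop atTop ∧
      ∃ gStar, gL < gStar ∧ case2Cubic φL φR s gL qL gStar = 0 := by
  have hneg : case2Cubic φL φR s gL qL gL < 0 := case2Cubic_self_neg hgL hlt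
  have hlim : Tendsto (case2Cubic φL φR s gL qL) atTop atTop := tendsto_case2Cubic_atTop hqL
  exact ⟨hneg, hlim,
    Ioi_subset_image_Ioi_of_tendsto_atTop continuous_case2Cubic.continuousOn hlim hneg⟩

end case2Cubic

/-- Existence of the intermediate state in Case 2 of the Riemann problem:
if `f_R b_R < f_L b_L` then the cubic
`F₂(g) = q_L g³ + g g_L (f_R b_R − f_L b_L − √(f_L b_L f_R b_R))
          − g_L² (g_L q_L + f_L b_L − f_R b_R − √(f_L b_L f_R b_R))`
satisfies `F₂(g_L) < 0`, `F₂(g) → +∞` as `g → +∞`, and hence has a root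
`g* > g_L`. -/
theorem riemann_case2_intermediate_state (fL bL gL qL fR bR : ℝ)
    (hfL : 0 < fL) (hbL : 0 < bL) (hgL : 0 < gL) (hqL : 0 < qL)
    (hfR : 0 < fR) (hbR : 0 < bR) (hlt : fR * bR < fL * bL) :
    (qL * gL^3 + gL * gL * (fR*bR - fL*bL - Real.sqrt (fL*bL*(fR*bR)))
        - gL^2 * (gL*qL + fL*bL - fR*bR - Real.sqrt (fL*bL*(fR*bR))) < 0) ∧
    Filter.Tendsto
      (fun g : ℝ => qL * g^3 + g * gL * (fR*bR - fL*bL - Real.sqrt (fL*bL*(fR*bR)))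
        - gL^2 * (gL*qL + fL*bL - fR*bR - Real.sqrt (fL*bL*(fR*bR))))
      Filter.atTop Filter.atTop ∧
    ∃ gStar : ℝ, gL < gStar ∧
      qL * gStar^3 + gStar * gL * (fR*bR - fL*bL - Real.sqrt (fL*bL*(fR*bR)))
        - gL^2 * (gL*qL + fL*bL - fR*bR - Real.sqrt (fL*bL*(fR*bR))) = 0 :=
  riemann_case2_intermediate_state_general hgL.ne' hqL hlt
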